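/- Recursive formula for the wavelet coefficients of Dirac functions: for each B ⊆ [n] with |B| ≥ 2 and each π' ∈ Γ(B), let (X^{B,π'}_{B'})_{B'∈P̄(B)} with X^{B,π'}_{B'} ∈ H_{B'} be the unique family such that δ_{π'} = Σ_{B'∈P̄(B)} φ_B X^{B,π'}_{B'} (such a family exists and is unique), and set α_B(π, π') := X^{B,π'}_B(π) for π ∈ Γ(B). Then for all π, π' ∈ Γ(B) with |B| = m and π = π₁…π_m: α_B(π, π') = 1{π = π'} − 1/m! − Σ_{1≤i<j≤m, j−i<m−1} (1/(m−j+i)!)·α_{C(i,j)}(π_i…π_j, π'|_{C(i,j)}), where C(i,j) := {π_i,…,π_j} is the content of the contiguous subword π_i…π_j of π. -/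

import Mathlib

open Finset
open scoped List

abbrev Word (n : ℕ) := List (Fin n)

/-- `Γ(A)`: duplicate-free words whose set of letters is exactly `A`. -/
noncomputable def rankings (n : ℕ) (A : Finset (Fin n)) : Finset (Word n) :=
  A.toList.permutations.toFinset

/-- All duplicate-free words on `[n]`. -/
noncomputable def allWords (n : ℕ) : Finset (Word n) :=
  Finset.univ.biUnion fun A : Finset (Fin n) => rankings n A

def IsRanking {n : ℕ} (A : Finset (Fin n)) (w : Word n) : Prop :=
  w.Nodup ∧ w.toFinset = A

instance {n : ℕ} (A : Finset (Fin n)) (w : Word n) : Decidable (IsRanking A w) :=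
  inferInstanceAs (Decidable (w.Nodup ∧ w.toFinset = A))

/-- Membership in `L(Γ(A))`: functions supported on `Γ(A)`. -/
def MemL {n : ℕ} (A : Finset (Fin n)) (F : Word n → ℝ) : Prop :=
  ∀ w, F w ≠ 0 → IsRanking A w

/-- Marginal operator `M_B` (with the convention `M_∅ F = (Σ F)·δ_0̄`). -/
noncomputable def marg {n : ℕ} (B : Finset (Fin n)) (F : Word n → ℝ) : Word n → ℝ :=
  fun π => if IsRanking B π then ∑ σ ∈ allWords n, (if π <+ σ then F σ else 0) else 0

/-- Membership in the localization space `H_B` (for `B = ∅` this is `L(Γ(∅)) = ℝ·δ_0̄`). -/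
def MemH {n : ℕ} (B : Finset (Fin n)) (F : Word n → ℝ) : Prop :=
  MemL B F ∧
    (∀ B' : Finset (Fin n), B' ⊂ B → 2 ≤ B'.card → marg B' F = 0) ∧
    (2 ≤ B.card → ∑ π ∈ rankings n B, F π = 0)

/-- `P̄(A) = {B ⊆ A : |B| ≥ 2} ∪ {∅}`. -/
def Pbar {n : ℕ} (A : Finset (Fin n)) : Finset (Finset (Fin n)) :=
  A.powerset.filter fun B => 2 ≤ B.card ∨ B = ∅

/-- Synthesis operator `φ_A`. -/
noncomputable def synth {n : ℕ} (A : Finset (Fin n)) (F : Word n → ℝ) : Word n → ℝ :=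
  fun σ =>
    if IsRanking A σ then
      F [] / (Nat.factorial A.card : ℝ) +
        ∑ π ∈ allWords n,
          (if π ≠ [] ∧ π <:+: σ then F π / (Nat.factorial (A.card - π.length + 1) : ℝ) else 0)
    else 0

/-- Dirac function `δ_π`. -/
noncomputable def dirac {n : ℕ} (π : Word n) : Word n → ℝ :=
  fun w => if w = π then 1 else 0

/-- `σ|_C`: the induced word of `σ` on `C`. -/
def restrictWord {n : ℕ} (σ : Word n) (C : Finset (Fin n)) : Word n :=
  σ.filter fun a => decide (a ∈ C)


theorem append_cons_inj_aux {T : Type*} {b : T} {x y x' y' : List T} (h : b ∉ x) (h' : b ∉ x') :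
    x ++ b :: y = x' ++ b :: y' ↔ x = x' ∧ y = y' := by
  refine ⟨fun e => ?_, fun e => by rw [e.1, e.2]⟩
  induction x generalizing x' with
  | nil => cases x' with
    | nil => simpa using e
    | cons c x' => simp at e h'; exact absurd e.1 h'.1
  | cons d x ih => cases x' with
    | nil => simp at e h; exact absurd e.1.symm h.1
    | cons c x' =>
      simp only [List.cons_append, List.cons.injEq, List.mem_cons, not_or] at e h h'
      have := ih h.2 h'.2 e.2
      exact ⟨by rw [e.1, this.1], this.2⟩

theorem mem_rankings {n : ℕ} {A : Finset (Fin n)} {w : Word n} :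
    w ∈ rankings n A ↔ IsRanking A w := by
  unfold rankings IsRanking
  rw [List.mem_toFinset, List.mem_permutations]
  constructor
  · intro h
    refine ⟨h.nodup_iff.2 A.nodup_toList, ?_⟩
    rw [List.toFinset_eq_of_perm _ _ h, Finset.toList_toFinset]
  · rintro ⟨h, rfl⟩
    exact (List.toFinset_toList h).symm

theorem mem_allWords {n : ℕ} {w : Word n} : w ∈ allWords n ↔ w.Nodup := by
  simp [allWords, mem_rankings, IsRanking]

theorem IsRanking.length {n : ℕ} {A : Finset (Fin n)} {w : Word n} (h : IsRanking A w) :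
    w.length = A.card := by
  rw [← h.2, List.toFinset_card_of_nodup h.1]

theorem infix_split {T : Type*} {b : T} {p x y : List T} (hb : b ∉ p)
    (h : p <:+: x ++ b :: y) : p <:+: x ∨ p <:+: y := by
  obtain ⟨s, t, h⟩ := h
  rcases List.append_eq_append_iff.1 h with ⟨a, h1, h2⟩ | ⟨a, h1, h2⟩
  · exact Or.inl ⟨s, a, h1.symm⟩
  · rcases a with _ | ⟨c, a⟩
    · exact Or.inl ⟨s, [], by simpa using h1⟩
    · simp only [List.cons_append, List.cons.injEq] at h2
      obtain ⟨rfl, h2⟩ := h2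
      rcases List.append_eq_append_iff.1 h1 with ⟨d, h3, h4⟩ | ⟨d, h3, h4⟩
      · rcases d with _ | ⟨e, d⟩
        · simp only [List.nil_append] at h4
          exact absurd (h4 ▸ List.mem_cons_self) hb
        · exact absurd (h4 ▸ by simp) hb
      · rcases d with _ | ⟨e, d⟩
        · simp only [List.nil_append] at h4
          exact absurd (h4 ▸ List.mem_cons_self) hb
        · simp only [List.cons_append, List.cons.injEq] at h4
          exact Or.inr ⟨d, t, by rw [h2, h4.2]⟩

theorem append_pos {T : Type*} {p s t s' t' : List T} (hp : p ≠ []) (hn : (s ++ p ++ t).Nodup)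
    (h : s ++ p ++ t = s' ++ p ++ t') : s = s' ∧ t = t' := by
  rcases p with _ | ⟨c, p⟩
  · exact absurd rfl hp
  have hn' := hn
  rw [h] at hn'
  have h1 : c ∉ s := by
    intro hc; simp [List.nodup_append] at hn; grind
  have h2 : c ∉ s' := by
    intro hc; simp [List.nodup_append] at hn'; grind
  simp only [List.append_assoc, List.cons_append] at h
  have := (append_cons_inj_aux h1 h2).1 h
  exact ⟨this.1, List.append_cancel_left this.2⟩

theorem sum_insert {n : ℕ} {B : Finset (Fin n)} {b : Fin n} (hb : b ∈ B) {ρ : Word n}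
    (hρ : IsRanking (B.erase b) ρ) (g : Word n → ℝ) :
    ∑ σ ∈ (rankings n B).filter (fun σ => σ.erase b = ρ), g σ =
      ∑ k ∈ Finset.range (ρ.length + 1), g (ρ.take k ++ b :: ρ.drop k) := by
  have hbρ : b ∉ ρ := by
    rw [← List.mem_toFinset, hρ.2]; simp
  symm
  refine Finset.sum_bij (fun k _ => ρ.take k ++ b :: ρ.drop k) ?_ ?_ ?_ ?_
  · intro k hk
    rw [Finset.mem_filter, mem_rankings]
    have hbt : b ∉ ρ.take k := fun h => hbρ (List.mem_of_mem_take h)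
    refine ⟨⟨?_, ?_⟩, ?_⟩
    · rw [List.nodup_middle, List.take_append_drop]
      exact List.nodup_cons.2 ⟨hbρ, hρ.1⟩
    · have : (ρ.take k ++ b :: ρ.drop k).toFinset = insert b (ρ.take k ++ ρ.drop k).toFinset := by
        ext x; simp only [List.mem_toFinset, List.mem_append, List.mem_cons, Finset.mem_insert]; tauto
      rw [this, List.take_append_drop, hρ.2, Finset.insert_erase hb]
    · rw [List.erase_append_right _ hbt, List.erase_cons_head, List.take_append_drop]
  · intro k hk l hl h
    simp only [Finset.mem_range] at hk hl
    have hbt : ∀ k, b ∉ ρ.take k := fun k h => hbρ (List.mem_of_mem_take h)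
    have := ((append_cons_inj_aux (hbt k) (hbt l)).1 h).1
    have := congrArg List.length this
    simp only [List.length_take] at this
    omega
  · intro σ hσ
    rw [Finset.mem_filter, mem_rankings] at hσ
    obtain ⟨⟨h1, h2⟩, h3⟩ := hσ
    have hbσ : b ∈ σ := by rw [← List.mem_toFinset, h2]; exact hb
    obtain ⟨s, t, hs, hst⟩ := List.exists_erase_eq hbσ
    obtain ⟨h4, h5⟩ := hst
    rw [h3] at h5
    subst h5
    exact ⟨s.length, by simp, by simp [h4]⟩
  · intros; rfl

/-- number of insertions, letter outside of the pattern -/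
theorem card_ins_notMem {n : ℕ} {b : Fin n} {p ρ : Word n} (hρ : ρ.Nodup)
    (hbp : b ∉ p) (hp : p ≠ []) :
    ((Finset.range (ρ.length + 1)).filter
      (fun k => p <:+: ρ.take k ++ b :: ρ.drop k)).card =
      if p <:+: ρ then ρ.length + 2 - p.length else 0 := by
  have key : ∀ k, p <:+: ρ.take k ++ b :: ρ.drop k ↔ p <:+: ρ.take k ∨ p <:+: ρ.drop k := by
    intro k
    refine ⟨infix_split hbp, ?_⟩
    rintro (h | h)
    · exact h.trans (List.prefix_append _ _).isInfix
    · exact h.trans ((List.suffix_cons _ _).trans (List.suffix_append _ _)).isInfix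
  simp only [key]
  split_ifs with h
  · obtain ⟨s, t, rfl⟩ := h
    have : (Finset.range ((s ++ p ++ t).length + 1)).filter
        (fun k => p <:+: (s ++ p ++ t).take k ∨ p <:+: (s ++ p ++ t).drop k) =
        Finset.range (s.length + 1) ∪
          Finset.Ico (s.length + p.length) ((s ++ p ++ t).length + 1) := by
      ext k
      simp only [Finset.mem_filter, Finset.mem_range, Finset.mem_union, Finset.mem_Ico]
      constructor
      · rintro ⟨hk, h | h⟩
        · right
          refine ⟨?_, hk⟩
          obtain ⟨s', t', h⟩ := h
          have h2 := List.take_append_drop k (s ++ p ++ t)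
          rw [← h, List.append_assoc] at h2
          obtain ⟨rfl, -⟩ := append_pos hp hρ h2.symm
          have := congrArg List.length h
          simp only [List.length_append, List.length_take] at this hk
          omega
        · left
          obtain ⟨s', t', h⟩ := h
          have h2 := List.take_append_drop k (s ++ p ++ t)
          rw [← h, ← List.append_assoc, ← List.append_assoc] at h2
          obtain ⟨h3, -⟩ := append_pos hp hρ h2.symm
          have := congrArg List.length h3
          simp only [List.length_append, List.length_take] at this hk
          omega
      · rintro (h | h)
        · refine ⟨by simp; omega, Or.inr ?_⟩
          rw [List.append_assoc, List.drop_append_of_le_length (by omega)]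
          exact ⟨s.drop k, t, by simp⟩
        · refine ⟨h.2, Or.inl ?_⟩
          rw [List.take_append, List.take_of_length_le (by simp; omega)]
          exact ⟨s, _, rfl⟩
    rw [this, Finset.card_union_of_disjoint, Finset.card_range, Nat.card_Ico]
    · simp only [List.length_append]; omega
    · rw [Finset.disjoint_left]
      intro k h1 h2
      have := List.length_pos_iff.2 hp
      simp only [Finset.mem_range, Finset.mem_Ico] at h1 h2
      omega
  · rw [Finset.card_eq_zero, Finset.filter_eq_empty_iff]
    rintro k - (h1 | h1)
    · exact h (h1.trans (List.take_prefix _ _).isInfix)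
    · exact h (h1.trans (List.drop_suffix _ _).isInfix)

/-- number of insertions, letter in the pattern -/
theorem card_ins_mem {n : ℕ} {b : Fin n} {u v ρ : Word n} (hρ : ρ.Nodup) (hbρ : b ∉ ρ)
    (hb : b ∉ u) (hp : u ++ v ≠ []) :
    ((Finset.range (ρ.length + 1)).filter
      (fun k => u ++ b :: v <:+: ρ.take k ++ b :: ρ.drop k)).card =
      if u ++ v <:+: ρ then 1 else 0 := by
  have key : ∀ k s t, s ++ (u ++ b :: v) ++ t = ρ.take k ++ b :: ρ.drop k →
      s ++ u = ρ.take k ∧ v ++ t = ρ.drop k := by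
    intro k s t h
    have hbt : b ∉ ρ.take k := fun h => hbρ (List.mem_of_mem_take h)
    have hbt' : b ∉ ρ.drop k := fun h => hbρ (List.mem_of_mem_drop h)
    have hh : (s ++ u) ++ b :: (v ++ t) = ρ.take k ++ b :: ρ.drop k := by
      rw [← h]; simp
    have hnd : (ρ.take k ++ b :: ρ.drop k).Nodup := by
      rw [List.nodup_middle, List.take_append_drop]
      exact List.nodup_cons.2 ⟨hbρ, hρ⟩
    have h1 : b ∉ s ++ u := by
      rw [← hh, List.nodup_middle, List.nodup_cons] at hnd
      exact fun h => hnd.1 (List.mem_append_left _ h)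
    exact (append_cons_inj_aux h1 hbt).1 hh
  split_ifs with h
  · obtain ⟨s, t, rfl⟩ := h
    rw [Finset.card_eq_one]
    refine ⟨s.length + u.length, ?_⟩
    ext k
    simp only [Finset.mem_filter, Finset.mem_range, Finset.mem_singleton]
    constructor
    · rintro ⟨hk, s', t', h⟩
      obtain ⟨h1, h2⟩ := key k s' t' h
      have h3 := List.take_append_drop k (s ++ (u ++ v) ++ t)
      rw [← h1, ← h2] at h3
      have h4 : s ++ (u ++ v) ++ t = s' ++ (u ++ v) ++ t' := by rw [← h3]; simp
      obtain ⟨rfl, -⟩ := append_pos hp hρ h4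
      have := congrArg List.length h1
      simp only [List.length_append, List.length_take] at this hk
      omega
    · rintro rfl
      refine ⟨by simp only [List.length_append]; omega, s, t, ?_⟩
      have : s ++ (u ++ v) ++ t = (s ++ u) ++ (v ++ t) := by simp
      rw [this, ← List.length_append, List.take_left, List.drop_left]
      simp
  · rw [Finset.card_eq_zero, Finset.filter_eq_empty_iff]
    rintro k - ⟨s, t, h1⟩
    obtain ⟨h2, h3⟩ := key k s t h1
    refine h ⟨s, t, ?_⟩
    rw [← List.take_append_drop k ρ, ← h2, ← h3]
    simp

/-- the weight of the pattern `p` in the synthesis operator -/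
noncomputable def wt (m : ℕ) {n : ℕ} (p : Word n) : ℝ :=
  if p = [] then 1 / (Nat.factorial m : ℝ) else 1 / (Nat.factorial (m - p.length + 1) : ℝ)

/-- the kernel of the synthesis operator -/
noncomputable def ker {n : ℕ} (B : Finset (Fin n)) (p σ : Word n) : ℝ :=
  if p <:+: σ then wt B.card p else 0

theorem synth_eq {n : ℕ} {B : Finset (Fin n)} (F : Word n → ℝ) {σ : Word n} (hσ : IsRanking B σ) :
    synth B F σ = ∑ p ∈ allWords n, F p * ker B p σ := by
  have h0 : ([] : Word n) ∈ allWords n := mem_allWords.2 List.nodup_nil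
  unfold synth
  rw [if_pos hσ, ← Finset.add_sum_erase _ _ h0, ← Finset.add_sum_erase (allWords n)
    (fun p => F p * ker B p σ) h0]
  simp only [ne_eq, not_true_eq_false, false_and, if_false, zero_add]
  congr 1
  · simp [ker, wt, div_eq_mul_inv]
  · refine Finset.sum_congr rfl fun p hp => ?_
    have hp := (Finset.mem_erase.1 hp).1
    simp [ker, wt, hp, div_eq_mul_inv]

theorem sum_ite_card {S : Finset ℕ} (P : ℕ → Prop) [DecidablePred P] (c : ℝ) :
    ∑ k ∈ S, (if P k then c else 0) = (S.filter P).card * c := by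
  rw [← Finset.sum_filter, Finset.sum_const, nsmul_eq_mul]

theorem fact_div (k : ℕ) : ((k + 1 : ℕ) : ℝ) * (1 / (Nat.factorial (k + 1) : ℝ)) =
    1 / (Nat.factorial k : ℝ) := by
  rw [Nat.factorial_succ]; push_cast
  have : (k : ℝ) + 1 ≠ 0 := by positivity
  have : (Nat.factorial k : ℝ) ≠ 0 := by positivity
  field_simp

theorem ker_step {n : ℕ} {B : Finset (Fin n)} {b : Fin n} (hb : b ∈ B) {ρ p : Word n}
    (hρ : IsRanking (B.erase b) ρ) (hp : p.Nodup) (hpB : p.toFinset ⊆ B) :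
    ∑ σ ∈ (rankings n B).filter (fun σ => σ.erase b = ρ), ker B p σ =
      ker (B.erase b) (p.erase b) ρ := by
  rw [sum_insert hb hρ]
  have hbρ : b ∉ ρ := by
    rw [← List.mem_toFinset, hρ.2]; simp
  have hl := hρ.length
  have hc := Finset.card_erase_add_one hb
  have hcard : B.card = ρ.length + 1 := by omega
  have hpl : p.length ≤ B.card := by
    rw [← List.toFinset_card_of_nodup hp]; exact Finset.card_le_card hpB
  unfold ker
  rw [sum_ite_card]
  by_cases hbp : b ∈ p
  · obtain ⟨u, v, hu, rfl, he⟩ := List.exists_erase_eq hbp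
    rw [he]
    by_cases huv : u ++ v = []
    · obtain ⟨rfl, rfl⟩ := List.append_eq_nil_iff.1 huv
      have : (Finset.range (ρ.length + 1)).filter
          (fun k => [] ++ [b] <:+: ρ.take k ++ b :: ρ.drop k) = Finset.range (ρ.length + 1) := by
        rw [Finset.filter_true_of_mem]
        intro k _
        exact ⟨ρ.take k, ρ.drop k, by simp⟩
      rw [this, Finset.card_range]
      simp only [wt, ← hl, hcard]
      simpa using fact_div ρ.length
    · rw [card_ins_mem hρ.1 hbρ hu huv]
      split_ifs with h
      · simp only [wt, huv, if_false, ← hl, hcard, Nat.cast_one, one_mul]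
        rw [if_neg (by simp)]
        simp only [List.length_append, List.length_cons]
        congr 4
        omega
      · simp
  · rw [List.erase_of_not_mem hbp]
    by_cases hp0 : p = []
    · subst hp0
      simp only [List.nil_infix, Finset.filter_true, if_true, Finset.card_range, wt, ← hl, hcard]
      exact fact_div ρ.length
    · rw [card_ins_notMem hρ.1 hbp hp0]
      split_ifs with h
      · simp only [wt, hp0, if_false, ← hl, hcard]
        have h1 := h.length_le
        have e1 : ρ.length + 2 - p.length = (ρ.length - p.length + 1) + 1 := by omega
        have e2 : ρ.length + 1 - p.length + 1 = (ρ.length - p.length + 1) + 1 := by omega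
        rw [e1, e2]
        exact fact_div _
      · simp

theorem restrict_isRanking {n : ℕ} {B C : Finset (Fin n)} {σ : Word n} (h : IsRanking B σ) :
    IsRanking (B ∩ C) (restrictWord σ C) := by
  refine ⟨h.1.filter _, ?_⟩
  ext x
  simp [restrictWord, ← h.2]

theorem restrict_self {n : ℕ} {C : Finset (Fin n)} {σ : Word n} (h : σ.toFinset ⊆ C) :
    restrictWord σ C = σ := by
  unfold restrictWord
  rw [List.filter_eq_self]
  intro a ha
  simpa using h (List.mem_toFinset.2 ha)

theorem restrict_erase {n : ℕ} {C : Finset (Fin n)} {b : Fin n} (hb : b ∉ C) (σ : Word n) :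
    restrictWord (σ.erase b) C = restrictWord σ C := by
  unfold restrictWord
  induction σ with
  | nil => rfl
  | cons a t ih =>
    rw [List.erase_cons]
    split_ifs with h
    · have : a = b := by simpa using h
      subst this
      simp [hb]
    · simp only [List.filter_cons, ih]

theorem ker_marg {n : ℕ} {B' : Finset (Fin n)} : ∀ (d : ℕ) {B : Finset (Fin n)}
    (_ : (B \ B').card = d) (_ : B' ⊆ B) {τ p : Word n} (_ : IsRanking B' τ)
    (_ : p.Nodup) (_ : p.toFinset ⊆ B),
    ∑ σ ∈ (rankings n B).filter (fun σ => restrictWord σ B' = τ), ker B p σ =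
      ker B' (restrictWord p B') τ := by
  intro d
  induction d with
  | zero =>
    intro B hd hB τ p hτ hp hpB
    have : B = B' := by
      rw [Finset.card_eq_zero, Finset.sdiff_eq_empty_iff_subset] at hd
      exact hd.antisymm hB
    subst this
    have : (rankings n B).filter (fun σ => restrictWord σ B = τ) = {τ} := by
      ext σ
      rw [Finset.mem_filter, mem_rankings, Finset.mem_singleton]
      constructor
      · rintro ⟨h1, h2⟩
        rwa [restrict_self h1.2.subset] at h2
      · rintro rfl
        exact ⟨hτ, restrict_self hτ.2.subset⟩
    rw [this, Finset.sum_singleton, restrict_self hpB]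
  | succ d ih =>
    intro B hd hB τ p hτ hp hpB
    obtain ⟨b, hb⟩ : (B \ B').Nonempty := by
      rw [← Finset.card_pos]; omega
    have hb' := Finset.mem_sdiff.1 hb
    have h1 : B' ⊆ B.erase b := fun x hx =>
      Finset.mem_erase.2 ⟨fun h => hb'.2 (h ▸ hx), hB hx⟩
    have h2 : (B.erase b \ B').card = d := by
      rw [Finset.erase_sdiff_comm, Finset.card_erase_of_mem hb]; omega
    have h3 : (p.erase b).toFinset ⊆ B.erase b := by
      intro x hx
      rw [List.mem_toFinset, hp.mem_erase_iff] at hx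
      exact Finset.mem_erase.2 ⟨hx.1, hpB (List.mem_toFinset.2 hx.2)⟩
    have h4 := ih h2 h1 hτ (hp.erase b) h3
    rw [restrict_erase hb'.2] at h4
    rw [← h4]
    have maps : ∀ σ ∈ (rankings n B).filter (fun σ => restrictWord σ B' = τ), σ.erase b ∈
        (rankings n (B.erase b)).filter (fun σ => restrictWord σ B' = τ) := by
      intro σ hσ
      rw [Finset.mem_filter, mem_rankings] at hσ ⊢
      refine ⟨⟨hσ.1.1.erase b, ?_⟩, ?_⟩
      · ext x
        rw [List.mem_toFinset, hσ.1.1.mem_erase_iff, Finset.mem_erase, ← hσ.1.2, List.mem_toFinset]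
      · rw [restrict_erase hb'.2, hσ.2]
    rw [← Finset.sum_fiberwise_of_maps_to maps]
    refine Finset.sum_congr rfl fun ρ hρ => ?_
    rw [Finset.mem_filter, mem_rankings] at hρ
    rw [← ker_step hb'.1 hρ.1 hp hpB, Finset.filter_filter]
    refine Finset.sum_congr ?_ fun _ _ => rfl
    refine Finset.filter_congr fun σ hσ => ?_
    constructor
    · exact fun h => h.2
    · intro h
      refine ⟨?_, h⟩
      rw [← hρ.2, ← h, restrict_erase hb'.2]

theorem sublist_iff_restrict {n : ℕ} {C D : Finset (Fin n)} {σ ρ : Word n} (hσ : IsRanking C σ)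
    (hD : D ⊆ C) (hρ : IsRanking D ρ) : ρ <+ σ ↔ restrictWord σ D = ρ := by
  constructor
  · intro h
    have h1 : restrictWord ρ D <+ restrictWord σ D := h.filter _
    rw [restrict_self hρ.2.subset] at h1
    have h2 : IsRanking (C ∩ D) (restrictWord σ D) := restrict_isRanking hσ
    rw [Finset.inter_eq_right.2 hD] at h2
    exact (h1.eq_of_length (by rw [hρ.length, h2.length])).symm
  · rintro rfl
    exact List.filter_sublist

theorem sum_memL {n : ℕ} {C : Finset (Fin n)} {F : Word n → ℝ} (hF : MemL C F)
    (g : Word n → ℝ) : ∑ p ∈ allWords n, F p * g p = ∑ p ∈ rankings n C, F p * g p := by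
  symm
  refine Finset.sum_subset (fun p hp => mem_allWords.2 (mem_rankings.1 hp).1) ?_
  intro p _ hp
  by_contra h
  exact hp (mem_rankings.2 (hF p (left_ne_zero_of_mul h)))

theorem restrict_inter {n : ℕ} {C D : Finset (Fin n)} {σ : Word n} (hσ : IsRanking C σ) :
    restrictWord σ D = restrictWord σ (C ∩ D) := by
  unfold restrictWord
  refine List.filter_congr fun x hx => ?_
  have : x ∈ C := by rw [← hσ.2]; exact List.mem_toFinset.2 hx
  simp [this]

theorem ranking_unique {n : ℕ} {D : Finset (Fin n)} (hD : D.card ≤ 1) {σ ρ : Word n}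
    (hσ : IsRanking D σ) (hρ : IsRanking D ρ) : σ = ρ := by
  have h1 := hσ.length
  have h2 := hρ.length
  have h3 := hσ.2.trans hρ.2.symm
  rcases σ with _ | ⟨a, _ | ⟨a', σ⟩⟩ <;> rcases ρ with _ | ⟨c, _ | ⟨c', ρ⟩⟩ <;>
    simp at h1 h2 h3 ⊢ <;> first | omega | exact h3

theorem synth_marg {n : ℕ} {B B' C : Finset (Fin n)} {F : Word n → ℝ} (hF : MemH C F)
    (hC : 2 ≤ C.card ∨ C = ∅) (hCB : C ⊆ B) (hB : B' ⊆ B) {τ : Word n} (hτ : IsRanking B' τ) :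
    ∑ σ ∈ (rankings n B).filter (fun σ => restrictWord σ B' = τ), synth B F σ =
      if C ⊆ B' then synth B' F τ else 0 := by
  have h1 : ∑ σ ∈ (rankings n B).filter (fun σ => restrictWord σ B' = τ), synth B F σ =
      ∑ p ∈ rankings n C, F p * ker B' (restrictWord p B') τ := by
    have : ∀ σ ∈ (rankings n B).filter (fun σ => restrictWord σ B' = τ), synth B F σ =
        ∑ p ∈ rankings n C, F p * ker B p σ := by
      intro σ hσ
      rw [synth_eq F (mem_rankings.1 (Finset.mem_filter.1 hσ).1), sum_memL hF.1]
    rw [Finset.sum_congr rfl this, Finset.sum_comm]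
    refine Finset.sum_congr rfl fun p hp => ?_
    have hp := mem_rankings.1 hp
    rw [← Finset.mul_sum, ker_marg _ rfl hB hτ hp.1 (hp.2.subset.trans hCB)]
  rw [h1]
  split_ifs with h
  · rw [synth_eq F hτ, sum_memL hF.1]
    refine Finset.sum_congr rfl fun p hp => ?_
    rw [restrict_self ((mem_rankings.1 hp).2.subset.trans h)]
  · have hC2 : 2 ≤ C.card := by
      rcases hC with hC | hC
      · exact hC
      · exact absurd (hC ▸ Finset.empty_subset _) h
    have hss : C ∩ B' ⊂ C := by
      refine Finset.inter_subset_left.ssubset_of_ne fun e => h ?_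
      rw [← e]; exact Finset.inter_subset_right
    have maps : ∀ p ∈ rankings n C, restrictWord p B' ∈ rankings n (C ∩ B') := fun p hp =>
      mem_rankings.2 (restrict_isRanking (mem_rankings.1 hp))
    by_cases hD : 2 ≤ (C ∩ B').card
    · rw [← Finset.sum_fiberwise_of_maps_to maps]
      refine Finset.sum_eq_zero fun ρ hρ => ?_
      have hρ' := mem_rankings.1 hρ
      have hm := congrFun (hF.2.1 _ hss hD) ρ
      simp only [marg, if_pos hρ', Pi.zero_apply] at hm
      have e : ∀ σ ∈ allWords n, (if ρ <+ σ then F σ else 0) =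
          F σ * (if ρ <+ σ then 1 else 0) := by intros; split_ifs <;> simp
      rw [Finset.sum_congr rfl e, sum_memL hF.1] at hm
      have e2 : ∑ p ∈ (rankings n C).filter (fun p => restrictWord p B' = ρ),
          F p * ker B' (restrictWord p B') τ =
          (∑ p ∈ rankings n C, F p * (if ρ <+ p then 1 else 0)) * ker B' ρ τ := by
        rw [Finset.sum_filter, Finset.sum_mul]
        refine Finset.sum_congr rfl fun p hp => ?_
        have hp := mem_rankings.1 hp
        have := sublist_iff_restrict hp hss.subset hρ'
        rw [← restrict_inter hp] at this
        by_cases hh : restrictWord p B' = ρ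
        · rw [if_pos hh, if_pos (this.2 hh), hh]; ring
        · rw [if_neg hh, if_neg (fun h => hh (this.1 h))]; ring
      rw [e2, hm, zero_mul]
    · have hs := hF.2.2 hC2
      rcases (rankings n C).eq_empty_or_nonempty with h0 | ⟨q, hq⟩
      · rw [h0]; simp
      · have : ∀ p ∈ rankings n C, F p * ker B' (restrictWord p B') τ =
            F p * ker B' (restrictWord q B') τ := by
          intro p hp
          rw [ranking_unique (by omega) (mem_rankings.1 (maps p hp)) (mem_rankings.1 (maps q hq))]
        rw [Finset.sum_congr rfl this, ← Finset.sum_mul, hs, zero_mul]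

theorem mem_Pbar {n : ℕ} {A C : Finset (Fin n)} :
    C ∈ Pbar A ↔ C ⊆ A ∧ (2 ≤ C.card ∨ C = ∅) := by
  simp [Pbar]

theorem family_marg {n : ℕ} {B C : Finset (Fin n)} {X : Finset (Fin n) → Word n → ℝ}
    {π' : Word n} (hπ' : IsRanking B π') (hX : ∀ D ∈ Pbar B, MemH D (X D))
    (hd : dirac π' = ∑ D ∈ Pbar B, synth B (X D)) (hC : C ⊆ B) {τ : Word n}
    (hτ : IsRanking C τ) :
    ∑ D ∈ Pbar C, synth C (X D) τ = if τ = restrictWord π' C then 1 else 0 := by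
  have h1 : ∑ σ ∈ (rankings n B).filter (fun σ => restrictWord σ C = τ), dirac π' σ =
      if τ = restrictWord π' C then 1 else 0 := by
    unfold dirac
    rw [Finset.sum_ite_eq']
    simp only [Finset.mem_filter, mem_rankings, hπ', true_and, eq_comm]
  rw [← h1, hd]
  simp only [Finset.sum_apply]
  rw [Finset.sum_comm]
  have h2 : ∀ D ∈ Pbar B, ∑ σ ∈ (rankings n B).filter (fun σ => restrictWord σ C = τ),
      synth B (X D) σ = if D ⊆ C then synth C (X D) τ else 0 := fun D hD =>
    synth_marg (hX D hD) (mem_Pbar.1 hD).2 (mem_Pbar.1 hD).1 hC hτ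
  rw [Finset.sum_congr rfl h2, ← Finset.sum_filter]
  refine Finset.sum_congr ?_ fun _ _ => rfl
  ext D
  simp only [Finset.mem_filter, mem_Pbar]
  constructor
  · exact fun h => ⟨⟨h.1.trans hC, h.2⟩, h.1⟩
  · exact fun h => ⟨h.2, h.1.2⟩

theorem synth_self {n : ℕ} {C : Finset (Fin n)} {F : Word n → ℝ} (hF : MemL C F) {τ : Word n}
    (hτ : IsRanking C τ) : synth C F τ = F τ := by
  rw [synth_eq F hτ, sum_memL hF, Finset.sum_eq_single τ]
  · simp only [ker, List.infix_refl, if_true, wt]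
    split_ifs with h
    · have := hτ.length
      rw [h] at this
      simp only [List.length_nil] at this
      simp [← this]
    · simp [hτ.length]
  · intro p hp hne
    have hp := mem_rankings.1 hp
    rw [ker, if_neg, mul_zero]
    intro h
    exact hne (h.sublist.eq_of_length (by rw [hp.length, hτ.length]))
  · exact fun h => absurd (mem_rankings.2 hτ) h

theorem restrict_restrict {n : ℕ} {C D : Finset (Fin n)} (h : D ⊆ C) (σ : Word n) :
    restrictWord (restrictWord σ C) D = restrictWord σ D := by
  unfold restrictWord
  rw [List.filter_filter]
  refine List.filter_congr fun x _ => ?_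
  by_cases hx : x ∈ D
  · simp [hx, h hx]
  · simp [hx]

theorem memL_ext {n : ℕ} {C : Finset (Fin n)} {F G : Word n → ℝ} (hF : MemL C F) (hG : MemL C G)
    (h : ∀ τ, IsRanking C τ → F τ = G τ) : F = G := by
  ext τ
  by_cases hτ : IsRanking C τ
  · exact h τ hτ
  · have h1 : F τ = 0 := by_contra fun h => hτ (hF τ h)
    have h2 : G τ = 0 := by_contra fun h => hτ (hG τ h)
    rw [h1, h2]

theorem family_unique {n : ℕ} {B B₁ : Finset (Fin n)} {X Y : Finset (Fin n) → Word n → ℝ}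
    {π' : Word n} (hπ' : IsRanking B π') (hX : ∀ D ∈ Pbar B, MemH D (X D))
    (hd : dirac π' = ∑ D ∈ Pbar B, synth B (X D)) (hB₁ : B₁ ⊆ B)
    (hY : ∀ D ∈ Pbar B₁, MemH D (Y D))
    (hdY : dirac (restrictWord π' B₁) = ∑ D ∈ Pbar B₁, synth B₁ (Y D)) :
    ∀ (m : ℕ) (C : Finset (Fin n)), C.card = m → C ∈ Pbar B₁ → X C = Y C := by
  have hr : IsRanking B₁ (restrictWord π' B₁) := by
    have := restrict_isRanking (C := B₁) hπ'
    rwa [Finset.inter_eq_right.2 hB₁] at this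
  intro m
  induction m using Nat.strong_induction_on with
  | _ m ih =>
    intro C hm hC
    have hC1 := (mem_Pbar.1 hC).1
    have hCB : C ∈ Pbar B := mem_Pbar.2 ⟨hC1.trans hB₁, (mem_Pbar.1 hC).2⟩
    have hCC : C ∈ Pbar C := mem_Pbar.2 ⟨subset_rfl, (mem_Pbar.1 hC).2⟩
    refine memL_ext (hX C hCB).1 (hY C hC).1 fun τ hτ => ?_
    have h1 := family_marg hπ' hX hd (hC1.trans hB₁) hτ
    have h2 := family_marg hr hY hdY hC1 hτ
    rw [restrict_restrict hC1, ← h1, ← Finset.add_sum_erase _ _ hCC,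
      ← Finset.add_sum_erase _ _ hCC, synth_self (hX C hCB).1 hτ, synth_self (hY C hC).1 hτ] at h2
    have h3 : ∑ D ∈ (Pbar C).erase C, synth C (X D) τ =
        ∑ D ∈ (Pbar C).erase C, synth C (Y D) τ := by
      refine Finset.sum_congr rfl fun D hD => ?_
      obtain ⟨hne, hD⟩ := Finset.mem_erase.1 hD
      have hD := mem_Pbar.1 hD
      have hlt : D.card < m := hm ▸ Finset.card_lt_card (hD.1.ssubset_of_ne hne)
      rw [ih _ hlt D rfl (mem_Pbar.2 ⟨hD.1.trans hC1, hD.2⟩)]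
    linarith

theorem sum_infix {n : ℕ} {π : Word n} (hπ : π.Nodup) (f : Word n → ℝ) :
    ∑ w ∈ (allWords n).filter (fun w => w <:+: π ∧ 2 ≤ w.length ∧ w ≠ π), f w =
      ∑ i ∈ Finset.range π.length, ∑ j ∈ Finset.range π.length,
        (if i < j ∧ j - i < π.length - 1 then f ((π.drop i).take (j - i + 1)) else 0) := by
  rw [← Finset.sum_product', ← Finset.sum_filter]
  symm
  have hlen : ∀ i j, i < j → j < π.length → ((π.drop i).take (j - i + 1)).length = j - i + 1 := by
    intro i j h1 h2
    rw [List.length_take, List.length_drop]; omega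
  refine Finset.sum_bij (fun x _ => (π.drop x.1).take (x.2 - x.1 + 1)) ?_ ?_ ?_ ?_
  · rintro ⟨i, j⟩ h
    simp only [Finset.mem_filter, Finset.mem_product, Finset.mem_range] at h
    have hinf : (π.drop i).take (j - i + 1) <:+: π :=
      (List.take_prefix _ _).isInfix.trans (List.drop_suffix _ _).isInfix
    rw [Finset.mem_filter, mem_allWords]
    have hl := hlen i j h.2.1 h.1.2
    refine ⟨hπ.sublist hinf.sublist, hinf, ?_, ?_⟩
    · simp only [hl]; omega
    · intro e
      have := congrArg List.length e
      simp only [hl] at this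
      omega
  · rintro ⟨i, j⟩ h ⟨k, l⟩ h' e
    simp only [Finset.mem_filter, Finset.mem_product, Finset.mem_range] at h h'
    simp only at e
    have hl := hlen i j h.2.1 h.1.2
    have hl' := hlen k l h'.2.1 h'.1.2
    have d : ∀ i t, π = π.take i ++ (π.drop i).take t ++ (π.drop i).drop t := by
      intro i t
      rw [List.append_assoc, List.take_append_drop, List.take_append_drop]
    have d1 := d i (j - i + 1)
    have d2 := d k (l - k + 1)
    rw [← e] at d2
    have hne : (π.drop i).take (j - i + 1) ≠ [] := by
      intro e0; rw [e0] at hl; simp at hl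
    have := (append_pos hne (by rw [← d1]; exact hπ) (d1.symm.trans d2)).1
    have := congrArg List.length this
    rw [List.length_take, List.length_take] at this
    rw [← e, hl] at hl'
    rw [Prod.mk.injEq]
    omega
  · intro w hw
    rw [Finset.mem_filter] at hw
    obtain ⟨-, ⟨s, t, rfl⟩, h2, h3⟩ := hw
    have hlt : w.length < (s ++ w ++ t).length := by
      refine lt_of_le_of_ne (by simp; omega) fun e => h3 ?_
      exact (List.IsInfix.sublist ⟨s, t, rfl⟩).eq_of_length e
    refine ⟨(s.length, s.length + w.length - 1), ?_, ?_⟩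
    · simp only [Finset.mem_filter, Finset.mem_product, Finset.mem_range]
      simp only [List.length_append] at hlt ⊢
      omega
    · have : s.length + w.length - 1 - s.length + 1 = w.length := by omega
      simp only [this]
      rw [List.append_assoc, List.drop_left, List.take_left]
  · intros; rfl

/-- **Recursive formula for the wavelet coefficients of Dirac functions.**
Let `α B π π'` be the `H_B`-component, evaluated at `π`, of the (unique) MRA decomposition of
`δ_{π'}` in `L(Γ(B))`. Then `α` satisfies the stated recursion over contiguous subwords. -/
theorem alpha_recursion {n : ℕ} (hn : 2 ≤ n)
    (α : Finset (Fin n) → Word n → Word n → ℝ)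
    (hα : ∀ B : Finset (Fin n), 2 ≤ B.card → ∀ π' : Word n, IsRanking B π' →
      ∃ X : Finset (Fin n) → Word n → ℝ,
        (∀ B' ∈ Pbar B, MemH B' (X B')) ∧
        dirac π' = ∑ B' ∈ Pbar B, synth B (X B') ∧
        (∀ π : Word n, α B π π' = X B π))
    (B : Finset (Fin n)) (hB : 2 ≤ B.card)
    (π π' : Word n) (hπ : IsRanking B π) (hπ' : IsRanking B π') :
    α B π π' =
      (if π = π' then (1:ℝ) else 0) - 1 / (Nat.factorial B.card : ℝ) -
        ∑ i ∈ Finset.range π.length, ∑ j ∈ Finset.range π.length,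
          (if i < j ∧ j - i < π.length - 1 then
            α ((π.drop i).take (j - i + 1)).toFinset
                ((π.drop i).take (j - i + 1))
                (restrictWord π' ((π.drop i).take (j - i + 1)).toFinset) /
              (Nat.factorial (π.length - j + i) : ℝ)
          else 0) := by
  have hlen := hπ.length
  obtain ⟨X, hX, hd, hαX⟩ := hα B hB π' hπ'
  have hBB : B ∈ Pbar B := mem_Pbar.2 ⟨subset_rfl, Or.inl hB⟩
  have h0B : (∅ : Finset (Fin n)) ∈ Pbar B := mem_Pbar.2 ⟨Finset.empty_subset _, Or.inr rfl⟩
  -- the component at the empty set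
  have hX0 : X ∅ [] = 1 := by
    have hr : IsRanking (∅ : Finset (Fin n)) [] := ⟨List.nodup_nil, rfl⟩
    have h := family_marg hπ' hX hd (Finset.empty_subset B) hr
    have hP : Pbar (∅ : Finset (Fin n)) = {∅} := by
      ext D
      rw [mem_Pbar, Finset.mem_singleton, Finset.subset_empty]
      exact ⟨fun h => h.1, fun h => ⟨h, Or.inr h⟩⟩
    rw [hP, Finset.sum_singleton, synth_self (hX _ h0B).1 hr] at h
    rw [h, if_pos]
    simp [restrictWord]
  -- evaluate the decomposition at `π`
  set G : Word n → ℝ := fun w =>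
    if w.toFinset ∈ Pbar B then X w.toFinset w * ker B w π else 0 with hG
  have hsum : (if π = π' then (1:ℝ) else 0) = ∑ w ∈ allWords n, G w := by
    have h1 : (if π = π' then (1:ℝ) else 0) = dirac π' π := rfl
    rw [h1, hd, Finset.sum_apply]
    simp only [synth_eq _ hπ]
    rw [Finset.sum_comm]
    refine Finset.sum_congr rfl fun w hw => ?_
    have hw := mem_allWords.1 hw
    have h2 : ∀ D ∈ Pbar B, X D w * ker B w π =
        if w.toFinset = D then X w.toFinset w * ker B w π else 0 := by
      intro D hD
      split_ifs with h
      · rw [h]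
      · have : X D w = 0 := by_contra fun hh => h ((hX D hD).1 w hh).2
        rw [this, zero_mul]
    rw [Finset.sum_congr rfl h2, Finset.sum_ite_eq]
  set S := (allWords n).filter (fun w => w <:+: π ∧ 2 ≤ w.length ∧ w ≠ π) with hS
  have hπ0 : ([] : Word n) ≠ π := by
    rintro rfl
    simp at hlen; omega
  have hsum2 : ∑ w ∈ allWords n, G w = G [] + (G π + ∑ w ∈ S, G w) := by
    have hn1 : π ∉ S := by simp [hS]
    have hn2 : [] ∉ insert π S := by simp [hS, hπ0]
    rw [← Finset.sum_insert hn1, ← Finset.sum_insert hn2]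
    symm
    refine Finset.sum_subset ?_ ?_
    · intro w hw
      rw [mem_allWords]
      rw [Finset.mem_insert, Finset.mem_insert] at hw
      rcases hw with rfl | rfl | hw
      · exact List.nodup_nil
      · exact hπ.1
      · exact mem_allWords.1 (Finset.mem_filter.1 hw).1
    · intro w hw hw'
      simp only [hS, Finset.mem_insert, Finset.mem_filter, not_or, hw, true_and] at hw'
      obtain ⟨h1, h2, h3⟩ := hw'
      simp only [hG]
      split_ifs with h
      · rw [ker, if_neg, mul_zero]
        intro hi
        refine h3 ⟨hi, ?_, h2⟩
        rcases (mem_Pbar.1 h).2 with h4 | h4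
        · rwa [List.toFinset_card_of_nodup (mem_allWords.1 hw)] at h4
        · exact absurd (List.toFinset_eq_empty_iff _ |>.1 h4) h1
      · rfl
  have hG0 : G [] = 1 / (Nat.factorial B.card : ℝ) := by
    simp only [hG, List.toFinset_nil, h0B, if_true, hX0, ker, List.nil_infix, wt, one_mul]
  have hGπ : G π = α B π π' := by
    simp only [hG, hπ.2, hBB, if_true, ker, List.infix_refl, wt, hαX, hlen, if_neg hπ0.symm]
    simp
  have hGS : ∀ w ∈ S, G w = α w.toFinset w (restrictWord π' w.toFinset) /
      (Nat.factorial (π.length - w.length + 1) : ℝ) := by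
    intro w hw
    obtain ⟨h1, h2, h3, h4⟩ := Finset.mem_filter.1 hw
    have hwB : w.toFinset ⊆ B := by
      intro x hx
      rw [← hπ.2, List.mem_toFinset]
      exact h2.subset (List.mem_toFinset.1 hx)
    have hc : 2 ≤ w.toFinset.card := by
      rwa [List.toFinset_card_of_nodup (mem_allWords.1 h1)]
    have hw0 : w ≠ [] := by rintro rfl; simp at h3
    have hwP : w.toFinset ∈ Pbar B := mem_Pbar.2 ⟨hwB, Or.inl hc⟩
    have hr : IsRanking w.toFinset (restrictWord π' w.toFinset) := by
      have := restrict_isRanking (C := w.toFinset) hπ'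
      rwa [Finset.inter_eq_right.2 hwB] at this
    obtain ⟨Y, hY, hdY, hαY⟩ := hα _ hc _ hr
    have := family_unique hπ' hX hd hwB hY hdY _ _ rfl (mem_Pbar.2 ⟨subset_rfl, Or.inl hc⟩)
    simp only [hG, hwP, if_true, ker, h2, wt, hw0, if_false, hαY, this, hlen]
    rw [mul_one_div]
  rw [Finset.sum_congr rfl hGS, hS, sum_infix hπ.1 (fun w =>
    α w.toFinset w (restrictWord π' w.toFinset) /
      (Nat.factorial (π.length - w.length + 1) : ℝ))] at hsum2
  have hfin : ∀ i ∈ Finset.range π.length, ∀ j ∈ Finset.range π.length,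
      (if i < j ∧ j - i < π.length - 1 then
        α ((π.drop i).take (j - i + 1)).toFinset ((π.drop i).take (j - i + 1))
          (restrictWord π' ((π.drop i).take (j - i + 1)).toFinset) /
          (Nat.factorial (π.length - ((π.drop i).take (j - i + 1)).length + 1) : ℝ) else 0) =
      (if i < j ∧ j - i < π.length - 1 then
        α ((π.drop i).take (j - i + 1)).toFinset ((π.drop i).take (j - i + 1))
          (restrictWord π' ((π.drop i).take (j - i + 1)).toFinset) /
          (Nat.factorial (π.length - j + i) : ℝ) else 0) := by
    intro i _ j hj
    have hj := Finset.mem_range.1 hj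
    split_ifs with h
    · have : π.length - ((π.drop i).take (j - i + 1)).length + 1 = π.length - j + i := by
        rw [List.length_take, List.length_drop]; omega
      rw [this]
    · rfl
  rw [Finset.sum_congr rfl (fun i hi => Finset.sum_congr rfl (hfin i hi))] at hsum2
  rw [hsum, hsum2, hG0, hGπ]
  ring
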